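/- arXiv:1708.06554 — 2 statements merged into one kernel-verified Lean document; each statement's English description precedes it below -/
import Mathlib

section
/- Let 0 < q < 1 be real, let x be a real number, and let d be an odd positive integer. For every integer n ≥ 0, the Carlitz q-Euler polynomial values satisfy the distribution relation ℰ_{n,q}(x) = ((1+q)/(1+q^d)) · [d]_q^n · Σ_{a=0}^{d−1} (−q)^a ℰ_{n,q^d}((a+x)/d), where ℰ_{n,q^d} denotes the Carlitz q-Euler polynomial value formed with base q^d in place of q. -/
/-- The `q`-analogue `[x]_q = (1 - q^x)/(1 - q)` (real exponent, via `rpow`). -/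
noncomputable def qnum (q x : ℝ) : ℝ := (1 - q ^ x) / (1 - q)

/-- Carlitz `q`-Euler polynomial value
`ℰ_{n,q}(x) = (1+q) ∑_{m=0}^∞ (-q)^m [m+x]_q^n`. -/
noncomputable def qEuler (q : ℝ) (n : ℕ) (x : ℝ) : ℝ :=
  (1 + q) * ∑' m : ℕ, (-q) ^ m * (qnum q ((m : ℝ) + x)) ^ n

/-- Signed Stirling numbers of the first kind, defined as the coefficients of the
falling factorial: `x(x-1)⋯(x-n+1) = ∑_{k=0}^n S₁(n,k) x^k`. -/
noncomputable def S1 (n k : ℕ) : ℤ := (descPochhammer ℤ n).coeff k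

/-- Stirling numbers of the second kind, so that
`x^n = ∑_{k=0}^n S₂(n,k) x(x-1)⋯(x-k+1)`. -/
def S2 : ℕ → ℕ → ℕ
  | 0, 0 => 1
  | 0, _ + 1 => 0
  | _ + 1, 0 => 0
  | n + 1, k + 1 => S2 n k + (k + 1) * S2 n (k + 1)

/-- Carlitz type `q`-Changhee polynomial value
`Ch_{n,q}(x) = ∑_{k=0}^n S₁(n,k) ℰ_{k,q}(x)`. -/
noncomputable def qChanghee (q : ℝ) (n : ℕ) (x : ℝ) : ℝ :=
  ∑ k ∈ Finset.range (n + 1), (S1 n k : ℝ) * qEuler q k x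

lemma qEuler_summable (q x : ℝ) (hq0 : 0 < q) (hq1 : q < 1) (n : ℕ) :
    Summable (fun m : ℕ => (-q) ^ m * (qnum q ((m : ℝ) + x)) ^ n) := by
  have hg : Summable (fun m : ℕ => q ^ m * ((1 + q ^ x) / (1 - q)) ^ n) :=
    (summable_geometric_of_lt_one hq0.le hq1).mul_right _
  refine Summable.of_norm_bounded hg (fun m => ?_)
  have h1 : 0 < 1 - q := by linarith
  have hx : 0 < q ^ x := Real.rpow_pos_of_pos hq0 x
  have hm : q ^ ((m : ℝ) + x) ≤ q ^ x :=
    Real.rpow_le_rpow_of_exponent_ge hq0 hq1.le (by linarith [Nat.cast_nonneg (α := ℝ) m])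
  have hm0 : 0 < q ^ ((m : ℝ) + x) := Real.rpow_pos_of_pos hq0 _
  rw [norm_mul, norm_pow, norm_pow, norm_neg, Real.norm_eq_abs, Real.norm_eq_abs,
    abs_of_pos hq0]
  have hb : |qnum q ((m : ℝ) + x)| ≤ (1 + q ^ x) / (1 - q) := by
    unfold qnum
    rw [abs_div, abs_of_pos h1]
    gcongr
    rw [abs_le]
    constructor <;> linarith
  gcongr

lemma qnum_mul (q y : ℝ) (hq0 : 0 < q) (hq1 : q < 1) (d : ℕ) (hd0 : 0 < d) :
    qnum q (d : ℝ) * qnum (q ^ d) (y / d) = qnum q y := by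
  have hd : (d : ℝ) ≠ 0 := by positivity
  have h2 : q ^ d < 1 := pow_lt_one₀ hq0.le hq1 hd0.ne'
  have h3 : (q ^ d) ^ (y / d) = q ^ y := by
    rw [← Real.rpow_natCast, ← Real.rpow_mul hq0.le, mul_div_cancel₀ _ hd]
  unfold qnum
  rw [h3, Real.rpow_natCast]
  have h4 : 1 - q ≠ 0 := by linarith
  have h5 : 1 - q ^ d ≠ 0 := by linarith
  field_simp

theorem qEuler_distribution_relation (q x : ℝ) (hq0 : 0 < q) (hq1 : q < 1)
    (d : ℕ) (hd0 : 0 < d) (hd : Odd d) (n : ℕ) :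
    qEuler q n x = ((1 + q) / (1 + q ^ d)) * (qnum q (d : ℝ)) ^ n *
      ∑ a ∈ Finset.range d, (-q) ^ a * qEuler (q ^ d) n (((a : ℝ) + x) / (d : ℝ)) := by
  have : NeZero d := ⟨hd0.ne'⟩
  have hs := qEuler_summable q x hq0 hq1 n
  have hp : (1 + q ^ d) ≠ 0 := by positivity
  have hd' : (d : ℝ) ≠ 0 := by positivity
  set e := (Equiv.prodComm (Fin d) ℕ).trans (Nat.divModEquiv d).symm with he
  have hs' := e.summable_iff.mpr hs
  simp only [Function.comp_def] at hs'
  have key : ∀ (a : Fin d) (k : ℕ),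
      (-q) ^ (e (a, k)) * (qnum q (((e (a, k) : ℕ) : ℝ) + x)) ^ n =
        (qnum q (d : ℝ)) ^ n * (-q) ^ (a : ℕ) *
          ((-(q ^ d)) ^ k * (qnum (q ^ d) ((k : ℝ) + ((a : ℕ) + x) / d)) ^ n) := by
    intro a k
    have h1 : e (a, k) = k * d + a := by simp [he, Nat.divModEquiv]
    have h2 : (k : ℝ) + ((a : ℕ) + x) / d = (((k * d + a : ℕ) : ℝ) + x) / d := by
      push_cast
      field_simp
      ring
    rw [h1, h2, ← qnum_mul q _ hq0 hq1 d hd0, ← hd.neg_pow, mul_pow, pow_add, ← pow_mul,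
      mul_comm d k]
    ring
  unfold qEuler
  rw [← e.tsum_eq, Summable.tsum_prod hs', tsum_fintype, Finset.sum_range, Finset.mul_sum,
    Finset.mul_sum]
  refine Finset.sum_congr rfl (fun a _ => ?_)
  rw [tsum_congr (key a), tsum_mul_left]
  generalize (∑' k : ℕ, (-(q ^ d)) ^ k *
    (qnum (q ^ d) ((k : ℝ) + ((a : ℕ) + x) / d)) ^ n) = T
  field_simp
end

section
/- Let 0 < q < 1 be real, let x be a real number, and let r ≥ 1 be an integer. For every integer n ≥ 0, the absolutely convergent multiple series (1+q)^r · Σ_{(m₁,…,m_r) ∈ ℕ^r} (−q)^{m₁+⋯+m_r} · ∏_{j=0}^{n−1} ([m₁+⋯+m_r+x]_q − j) equals Σ_{k=0}^{n} S₁(n,k) ℰ^{(r)}_{k,q}(x); that is, the Carlitz type q-Changhee polynomial of order r, Ch^{(r)}_{n,q}(x), defined as the left-hand side, satisfies Ch^{(r)}_{n,q}(x) = Σ_{k=0}^{n} S₁(n,k) ℰ^{(r)}_{k,q}(x). -/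
/-- Higher-order Carlitz `q`-Euler polynomial value
`ℰ^{(r)}_{n,q}(x) = (1+q)^r ∑_{(m₁,…,m_r) ∈ ℕ^r} (-q)^{m₁+⋯+m_r} [m₁+⋯+m_r+x]_q^n`. -/
noncomputable def qEulerH (q : ℝ) (r n : ℕ) (x : ℝ) : ℝ :=
  (1 + q) ^ r * ∑' m : Fin r → ℕ,
    (-q) ^ (∑ i, m i) * (qnum q (((∑ i, m i : ℕ) : ℝ) + x)) ^ n

/-- Carlitz type `q`-Changhee polynomial of order `r`:
`Ch^{(r)}_{n,q}(x) = ∑_{k=0}^n S₁(n,k) ℰ^{(r)}_{k,q}(x)`. -/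
noncomputable def qChangheeH (q : ℝ) (r n : ℕ) (x : ℝ) : ℝ :=
  ∑ k ∈ Finset.range (n + 1), (S1 n k : ℝ) * qEulerH q r k x

theorem aux_summable_geom (q : ℝ) (hq0 : 0 < q) (hq1 : q < 1) (r : ℕ) :
    Summable fun m : Fin r → ℕ => q ^ (∑ i, m i) := by
  induction r with
  | zero => exact Summable.of_finite
  | succ r ih =>
    have h := (summable_geometric_of_lt_one hq0.le hq1).mul_of_nonneg ih
      (fun k => pow_nonneg hq0.le k) (fun m => pow_nonneg hq0.le _)
    rw [← (Fin.consEquiv (fun _ : Fin (r + 1) => ℕ)).summable_iff]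
    refine h.congr (fun p => ?_)
    simp [Fin.consEquiv, Fin.sum_univ_succ, pow_add]

theorem aux_qnum_bound (q x : ℝ) (hq0 : 0 < q) (hq1 : q < 1) (m : ℕ) :
    |qnum q ((m : ℝ) + x)| ≤ (1 + q ^ x) / (1 - q) := by
  have h1 : 0 < 1 - q := by linarith
  have h2 : 0 < q ^ x := Real.rpow_pos_of_pos hq0 x
  have h3 : 0 < q ^ ((m : ℝ) + x) := Real.rpow_pos_of_pos hq0 _
  have h4 : q ^ ((m : ℝ) + x) ≤ q ^ x :=
    Real.rpow_le_rpow_of_exponent_ge hq0 hq1.le (by simp)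
  unfold qnum
  rw [abs_div, abs_of_pos h1]
  gcongr
  rw [abs_le]
  constructor <;> linarith

theorem aux_summable_pow (q x : ℝ) (hq0 : 0 < q) (hq1 : q < 1) (r k : ℕ) :
    Summable fun m : Fin r → ℕ =>
      (-q) ^ (∑ i, m i) * (qnum q (((∑ i, m i : ℕ) : ℝ) + x)) ^ k := by
  refine Summable.of_norm_bounded
    ((aux_summable_geom q hq0 hq1 r).mul_right (((1 + q ^ x) / (1 - q)) ^ k)) (fun m => ?_)
  rw [norm_mul, norm_pow, norm_pow, norm_neg, Real.norm_eq_abs, Real.norm_eq_abs,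
    abs_of_pos hq0]
  gcongr
  exact aux_qnum_bound q x hq0 hq1 _

theorem aux_prod_eq (n : ℕ) (y : ℝ) :
    ∏ j ∈ Finset.range n, (y - (j : ℝ)) =
      ∑ k ∈ Finset.range (n + 1), (S1 n k : ℝ) * y ^ k := by
  rw [← descPochhammer_eval_eq_prod_range, Polynomial.eval_eq_sum_range'
    (n := n + 1) (by rw [descPochhammer_natDegree]; omega)]
  refine Finset.sum_congr rfl (fun k _ => ?_)
  rw [← descPochhammer_map (Int.castRingHom ℝ) n, Polynomial.coeff_map]
  simp [S1]

theorem qChangheeH_eq_sum_stirling1_qEulerH (q x : ℝ) (hq0 : 0 < q) (hq1 : q < 1)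
    (r : ℕ) (hr : 1 ≤ r) (n : ℕ) :
    (Summable fun m : Fin r → ℕ =>
      |(-q) ^ (∑ i, m i) *
        ∏ j ∈ Finset.range n, (qnum q (((∑ i, m i : ℕ) : ℝ) + x) - (j : ℝ))|) ∧
    (1 + q) ^ r * (∑' m : Fin r → ℕ,
        (-q) ^ (∑ i, m i) *
          ∏ j ∈ Finset.range n, (qnum q (((∑ i, m i : ℕ) : ℝ) + x) - (j : ℝ))) =
      ∑ k ∈ Finset.range (n + 1), (S1 n k : ℝ) * qEulerH q r k x := by
  have key : ∀ m : Fin r → ℕ, (-q) ^ (∑ i, m i) *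
        ∏ j ∈ Finset.range n, (qnum q (((∑ i, m i : ℕ) : ℝ) + x) - (j : ℝ)) =
      ∑ k ∈ Finset.range (n + 1), (S1 n k : ℝ) *
        ((-q) ^ (∑ i, m i) * (qnum q (((∑ i, m i : ℕ) : ℝ) + x)) ^ k) := by
    intro m
    rw [aux_prod_eq, Finset.mul_sum]
    exact Finset.sum_congr rfl (fun k _ => by ring)
  have hs : ∀ k ∈ Finset.range (n + 1), Summable fun m : Fin r → ℕ => (S1 n k : ℝ) *
        ((-q) ^ (∑ i, m i) * (qnum q (((∑ i, m i : ℕ) : ℝ) + x)) ^ k) :=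
    fun k _ => (aux_summable_pow q x hq0 hq1 r k).mul_left _
  simp_rw [key]
  refine ⟨(summable_sum hs).abs, ?_⟩
  rw [Summable.tsum_finsetSum hs, Finset.mul_sum]
  refine Finset.sum_congr rfl (fun k _ => ?_)
  rw [tsum_mul_left, qEulerH]
  ring
end
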